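/- Assume 𝕋 is bounded and let S be the self-adjoint operator with separated boundary conditions as above. Let z ∈ ℂ \ ℝ, and let (u_a, u_a^[1]) and (u_b, u_b^[1]) be nontrivial solution pairs of (ℓ − z)u = 0 with u_a(σ(a))·cos φ_α − u_a^[1](σ(a))·sin φ_α = 0 and u_b(b)·cos φ_β − u_b^[1](b)·sin φ_β = 0. Then the (constant) Wronskian W(u_b, u_a) is nonzero, and for every f ∈ L²(𝕋_κ; r dσ_κ), the unique element g of the domain of S with (S − z)g = f is given, for dσ_κ-a.e. x ∈ 𝕋_κ, by g(x) = ∫_{𝕋_κ} G_z(x,y)·f(y)·r(y) dσ_κ(y), where G_z(x,y) = W(u_b,u_a)^{-1}·u_a(x)·u_b(y) if x < y and G_z(x,y) = W(u_b,u_a)^{-1}·u_a(y)·u_b(x) if x ≥ y. -/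

import Mathlib

open MeasureTheory Set Filter
open scoped ENNReal NNReal Classical

/-- Forward shift of a time scale. -/
noncomputable def tsSigma (T : Set ℝ) (t : ℝ) : ℝ :=
  if ({s | s ∈ T ∧ t < s}).Nonempty then sInf {s | s ∈ T ∧ t < s} else sSup T

/-- Backward shift of a time scale. -/
noncomputable def tsRho (T : Set ℝ) (t : ℝ) : ℝ :=
  if ({s | s ∈ T ∧ s < t}).Nonempty then sSup {s | s ∈ T ∧ s < t} else sInf T

/-- `𝕋_κ` : the time scale with the left endpoint removed if it is finite and right-scattered. -/
noncomputable def tsKappa (T : Set ℝ) : Set ℝ :=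
  if BddBelow T ∧ sInf T < tsSigma T (sInf T) then T \ {sInf T} else T

/-- Extension `p̄` of a function on `𝕋_κ` to all of `ℝ`. -/
noncomputable def extK (T : Set ℝ) (p : ℝ → ℂ) (t : ℝ) : ℂ :=
  if t ∈ tsKappa T then p t else p (tsSigma (tsKappa T) t)

/-- Coercion of a real-valued coefficient to a complex-valued one. -/
def cR (f : ℝ → ℝ) : ℝ → ℂ := fun t => (f t : ℂ)

/-- `(u, u^[1])` is an integrated pair with density `h` against the measure `μ = dσ_κ`. -/
def IsPair (T : Set ℝ) (μ : Measure ℝ) (p : ℝ → ℂ) (u u1 h : ℝ → ℂ) : Prop :=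
  ∀ c x : ℝ, c ≤ x →
    u x = u c + ∫ t in c..x, u1 t / extK T p t ∧
    u1 x = u1 c + ∫ t in Set.Ioc c x, h t ∂μ

/-- `(u, u^[1])` is a solution pair of `(ℓ - z) u = g`. -/
def IsSLSol (T : Set ℝ) (μ : Measure ℝ) (p r q : ℝ → ℂ) (z : ℂ) (g : ℝ → ℂ)
    (u u1 : ℝ → ℂ) : Prop :=
  IsPair T μ p u u1 (fun t => (q t - z * r t) * u t - r t * g t)

/-- Wronskian of two pairs. -/
def Wr (u u1 v v1 : ℝ → ℂ) (x : ℝ) : ℂ := u x * v1 x - u1 x * v x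

/-- The integrand `|u|² r` as an `ℝ≥0∞`-valued function. -/
noncomputable def sqWeight (r : ℝ → ℝ) (u : ℝ → ℂ) (t : ℝ) : ℝ≥0∞ :=
  ((‖u t‖₊ : ℝ≥0∞)) ^ 2 * ENNReal.ofReal (r t)

/-- `u` lies in `L²` near the left endpoint `a`. -/
def L2NearLeft (T : Set ℝ) (μ : Measure ℝ) (r : ℝ → ℝ) (u : ℝ → ℂ) : Prop :=
  ∀ c ∈ tsKappa T, ∫⁻ t in {t | (∃ s ∈ T, s < t) ∧ t ≤ c} ∩ tsKappa T, sqWeight r u t ∂μ < ∞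

/-- `u` lies in `L²` near the right endpoint `b`. -/
def L2NearRight (T : Set ℝ) (μ : Measure ℝ) (r : ℝ → ℝ) (u : ℝ → ℂ) : Prop :=
  ∀ c ∈ tsKappa T, ∫⁻ t in {t | c ≤ t ∧ ∃ s ∈ T, t < s} ∩ tsKappa T, sqWeight r u t ∂μ < ∞

/-- `ℓ` is in the limit-circle case at the left endpoint. -/
def LimitCircleLeft (T : Set ℝ) (μ : Measure ℝ) (p r q : ℝ → ℝ) : Prop :=
  ∀ z : ℂ, ∀ u u1 : ℝ → ℂ, IsSLSol T μ (cR p) (cR r) (cR q) z 0 u u1 → L2NearLeft T μ r u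

/-- `ℓ` is in the limit-point case at the left endpoint. -/
def LimitPointLeft (T : Set ℝ) (μ : Measure ℝ) (p r q : ℝ → ℝ) : Prop :=
  ∀ z : ℂ, ∃ u u1 : ℝ → ℂ, IsSLSol T μ (cR p) (cR r) (cR q) z 0 u u1 ∧ ¬ L2NearLeft T μ r u

/-- `ℓ` is in the limit-circle case at the right endpoint. -/
def LimitCircleRight (T : Set ℝ) (μ : Measure ℝ) (p r q : ℝ → ℝ) : Prop :=
  ∀ z : ℂ, ∀ u u1 : ℝ → ℂ, IsSLSol T μ (cR p) (cR r) (cR q) z 0 u u1 → L2NearRight T μ r u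

/-- `ℓ` is in the limit-point case at the right endpoint. -/
def LimitPointRight (T : Set ℝ) (μ : Measure ℝ) (p r q : ℝ → ℝ) : Prop :=
  ∀ z : ℂ, ∃ u u1 : ℝ → ℂ, IsSLSol T μ (cR p) (cR r) (cR q) z 0 u u1 ∧ ¬ L2NearRight T μ r u

/-- The action `ℓ u = (-h + q u)/r` of the differential expression on a pair with density `h`. -/
noncomputable def ellApply (r q : ℝ → ℝ) (h u : ℝ → ℂ) (t : ℝ) : ℂ :=
  (-h t + (q t : ℂ) * u t) / (r t : ℂ)

/-- Membership in `L²(𝕋_κ; r dσ_κ)`. -/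
def MemL2T (T : Set ℝ) (μ : Measure ℝ) (r : ℝ → ℝ) (u : ℝ → ℂ) : Prop :=
  ∫⁻ t in tsKappa T, sqWeight r u t ∂μ < ∞

/-- The pair `(u, u^[1])` with density `h` belongs to `D_ℓ²`. -/
def MemD2 (T : Set ℝ) (μ : Measure ℝ) (p r q : ℝ → ℝ) (u u1 h : ℝ → ℂ) : Prop :=
  LocallyIntegrable h μ ∧ IsPair T μ (cR p) u u1 h ∧ MemL2T T μ r u ∧
    MemL2T T μ r (ellApply r q h u)

/-- The filter `x ↓ a`, `x ∈ 𝕋`. -/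
noncomputable def leftLimFilter (T : Set ℝ) : Filter ℝ :=
  if BddBelow T then nhdsWithin (sInf T) T else Filter.atBot ⊓ Filter.principal T

/-- The filter `x ↑ b`, `x ∈ 𝕋`. -/
noncomputable def rightLimFilter (T : Set ℝ) : Filter ℝ :=
  if BddAbove T then nhdsWithin (sSup T) T else Filter.atTop ⊓ Filter.principal T

/-- The measure `r dσ_κ` on `𝕋_κ`, giving the Hilbert space `L²(𝕋_κ; r dσ_κ)`. -/
noncomputable def wM (T : Set ℝ) (μ : Measure ℝ) (r : ℝ → ℝ) : Measure ℝ :=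
  (μ.restrict (tsKappa T)).withDensity fun t => ENNReal.ofReal (r t)

/-- `F` is a primitive of `f` with respect to `m`. -/
def Prim (m : Measure ℝ) (F f : ℝ → ℂ) : Prop :=
  (∀ c x : ℝ, IntegrableOn f (Set.Ioc c x) m) ∧
    ∀ c x : ℝ, c ≤ x → F x = F c + ∫ t in Set.Ioc c x, f t ∂m

lemma Prim.norm_sub_le {m : Measure ℝ} {F f : ℝ → ℂ} (h : Prim m F f) {g : ℝ → ℝ} {c d : ℝ}
    (hg : IntegrableOn g (Set.Ioc c d) m) (hg0 : ∀ t, 0 ≤ g t) (hfg : ∀ t ∈ Set.Ioc c d, ‖f t‖ ≤ g t)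
    {x y : ℝ} (hx : x ∈ Set.Icc c d) (hy : y ∈ Set.Icc c d) :
    ‖F x - F y‖ ≤ ∫ t in Set.Ioc c d, g t ∂m := by
  wlog hxy : y ≤ x generalizing x y
  · rw [norm_sub_rev]; exact this hy hx (le_of_not_ge hxy)
  rw [h.2 y x hxy, add_sub_cancel_left]
  have hsub : Set.Ioc y x ⊆ Set.Ioc c d := Set.Ioc_subset_Ioc hy.1 hx.2
  refine (norm_integral_le_of_norm_le (hg.mono_set hsub) ?_).trans
    (setIntegral_mono_set hg (Eventually.of_forall hg0) hsub.eventuallyLE)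
  exact (ae_restrict_iff' measurableSet_Ioc).2 (Eventually.of_forall fun t ht => hfg t (hsub ht))

lemma Prim.bdd {m : Measure ℝ} {F f : ℝ → ℂ} (h : Prim m F f) (c d : ℝ) :
    ∃ C, ∀ x ∈ Set.Icc c d, ‖F x‖ ≤ C := by
  refine ⟨‖F d‖ + ∫ t in Set.Ioc c d, ‖f t‖ ∂m, fun x hx => ?_⟩
  have := h.norm_sub_le (g := fun t => ‖f t‖) (h.1 c d).norm (fun t => norm_nonneg _)
    (fun t _ => le_rfl) hx (Set.right_mem_Icc.2 (hx.1.trans hx.2))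
  have h2 : ‖F x‖ ≤ ‖F d‖ + ‖F x - F d‖ := by
    simpa using norm_add_le (F d) (F x - F d)
  linarith

lemma Prim.measurable {m : Measure ℝ} [SFinite m] {F f : ℝ → ℂ} (h : Prim m F f) :
    Measurable F := by
  have hfm : AEStronglyMeasurable f m := by
    have : (⋃ n : ℕ, Set.Ioc (-(n:ℝ)) n) = Set.univ := by
      ext x; simp only [Set.mem_iUnion, Set.mem_Ioc, Set.mem_univ, iff_true]
      obtain ⟨n, hn⟩ := exists_nat_gt |x|
      exact ⟨n, by linarith [neg_abs_le x], by linarith [le_abs_self x]⟩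
    rw [← Measure.restrict_univ (μ := m), ← this, aestronglyMeasurable_iUnion_iff]
    intro n; exact (h.1 _ _).aestronglyMeasurable
  set f' := hfm.mk f with hf'
  have hae : f =ᵐ[m] f' := hfm.ae_eq_mk
  have key : ∀ x, F x = F 0 + ((∫ t, (Set.Ioc 0 x).indicator f' t ∂m)
      - ∫ t, (Set.Ioc x 0).indicator f' t ∂m) := by
    intro x
    rw [integral_indicator measurableSet_Ioc, integral_indicator measurableSet_Ioc,
      ← integral_congr_ae (ae_restrict_of_ae hae), ← integral_congr_ae (ae_restrict_of_ae hae)]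
    rcases le_total 0 x with hx | hx
    · rw [show Set.Ioc x 0 = ∅ from Set.Ioc_eq_empty (not_lt.2 hx), h.2 0 x hx]; simp
    · rw [show Set.Ioc 0 x = ∅ from Set.Ioc_eq_empty (not_lt.2 hx), h.2 x 0 hx]; simp
  have hfs : StronglyMeasurable f' := hfm.stronglyMeasurable_mk
  have e1 : StronglyMeasurable fun x : ℝ => ∫ t, (Set.Ioc 0 x).indicator f' t ∂m := by
    apply StronglyMeasurable.integral_prod_right
    have : Function.uncurry (fun x t : ℝ => (Set.Ioc 0 x).indicator f' t)
        = {q : ℝ × ℝ | 0 < q.2 ∧ q.2 ≤ q.1}.indicator (fun q => f' q.2) := by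
      ext ⟨x, t⟩; simp [Function.uncurry, Set.indicator]
    rw [this]
    refine (hfs.comp_measurable measurable_snd).indicator ?_
    exact (measurableSet_lt measurable_const measurable_snd).inter
      (measurableSet_le measurable_snd measurable_fst)
  have e2 : StronglyMeasurable fun x : ℝ => ∫ t, (Set.Ioc x 0).indicator f' t ∂m := by
    apply StronglyMeasurable.integral_prod_right
    have : Function.uncurry (fun x t : ℝ => (Set.Ioc x 0).indicator f' t)
        = {q : ℝ × ℝ | q.1 < q.2 ∧ q.2 ≤ 0}.indicator (fun q => f' q.2) := by
      ext ⟨x, t⟩; simp [Function.uncurry, Set.indicator]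
    rw [this]
    refine (hfs.comp_measurable measurable_snd).indicator ?_
    exact (measurableSet_lt measurable_fst measurable_snd).inter
      (measurableSet_le measurable_snd measurable_const)
  rw [show F = _ from funext key]
  exact measurable_const.add (e1.measurable.sub e2.measurable)

lemma Prim.continuous {F f : ℝ → ℂ} (h : Prim volume F f) : Continuous F := by
  have hint : ∀ a b : ℝ, IntervalIntegrable f volume a b := fun a b => ⟨h.1 _ _, h.1 _ _⟩
  have key : ∀ x, F x = F 0 + ∫ t in (0:ℝ)..x, f t := by
    intro x
    rcases le_total 0 x with hx | hx
    · rw [intervalIntegral.integral_of_le hx, h.2 0 x hx]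
    · rw [intervalIntegral.integral_of_ge hx, h.2 x 0 hx]; simp
  rw [show F = _ from funext key]
  exact continuous_const.add (intervalIntegral.continuous_primitive hint 0)

lemma prim_dichotomy {m : Measure ℝ} {F f : ℝ → ℂ}
    (h : ∀ c x : ℝ, c ≤ x → F x = F c + ∫ t in Set.Ioc c x, f t ∂m) :
    Prim m F f ∨ ∃ (n : ℝ) (C : ℂ), ∀ x, x ≠ n → F x = C := by
  by_cases hl : LocallyIntegrable f m
  · exact Or.inl ⟨fun c x => (hl.integrableOn_isCompact isCompact_Icc).mono_set
      Set.Ioc_subset_Icc_self, h⟩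
  · right
    obtain ⟨n, hn⟩ := not_forall.1 hl
    have hz : ∀ c x, c < n → n < x → F x = F c := by
      intro c x hc hx
      rw [h c x (hc.trans hx).le, integral_undef, add_zero]
      intro hi
      exact hn ⟨_, Ioc_mem_nhds hc hx, hi⟩
    refine ⟨n, F (n - 1), fun x hx => ?_⟩
    rcases lt_or_gt_of_ne hx with hx | hx
    · rw [← hz x (n+1) hx (by linarith), hz (n-1) (n+1) (by linarith) (by linarith)]
    · exact hz _ _ (by linarith) hx

lemma integrableOn_mul_of_bdd {m : Measure ℝ} {w u : ℝ → ℂ} {I : Set ℝ} (hI : MeasurableSet I)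
    (hw : IntegrableOn w I m) (hu : Measurable u) {C : ℝ} (hC : ∀ x ∈ I, ‖u x‖ ≤ C) :
    IntegrableOn (fun t => w t * u t) I m := by
  have : IntegrableOn (fun t => u t * w t) I m :=
    Integrable.bdd_mul (c := C) hw hu.aestronglyMeasurable
      ((ae_restrict_iff' hI).2 (Eventually.of_forall hC))
  simpa only [mul_comm] using this

lemma Prim.integrableOn_mul {m m' : Measure ℝ} [SFinite m] {U f : ℝ → ℂ} (hU : Prim m U f)
    {w : ℝ → ℂ} {c d : ℝ} (hw : IntegrableOn w (Set.Ioc c d) m') :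
    IntegrableOn (fun t => w t * U t) (Set.Ioc c d) m' := by
  obtain ⟨C, hC⟩ := hU.bdd c d
  exact integrableOn_mul_of_bdd measurableSet_Ioc hw hU.measurable
    (fun x hx => hC x (Set.Ioc_subset_Icc_self hx))

lemma sol_regular {μ : Measure ℝ} [SFinite μ] {k w u u1 : ℝ → ℂ}
    (hk : ∀ c x, IntegrableOn k (Set.Ioc c x) volume)
    (hw : ∀ c x, IntegrableOn w (Set.Ioc c x) μ)
    (h1 : ∀ c x : ℝ, c ≤ x → u x = u c + ∫ t in Set.Ioc c x, k t * u1 t)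
    (h2 : ∀ c x : ℝ, c ≤ x → u1 x = u1 c + ∫ t in Set.Ioc c x, w t * u t ∂μ) :
    Prim volume u (fun t => k t * u1 t) ∧ Prim μ u1 (fun t => w t * u t) := by
  rcases prim_dichotomy h1 with h | ⟨n, C, hC⟩
  · exact ⟨h, fun c x => h.integrableOn_mul (hw c x), h2⟩
  · have hu : u = fun x => C + ({n} : Set ℝ).indicator (fun _ => u n - C) x := by
      ext x; by_cases hx : x = n
      · subst hx; simp
      · simp [hx, hC x hx]
    have hum : Measurable u := by
      rw [hu]; exact measurable_const.add (measurable_const.indicator (measurableSet_singleton n))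
    have hb : ∀ x, ‖u x‖ ≤ max ‖C‖ ‖u n‖ := by
      intro x; by_cases hx : x = n
      · subst hx; simp
      · simp [hC x hx]
    have hp : Prim μ u1 (fun t => w t * u t) :=
      ⟨fun c x => integrableOn_mul_of_bdd measurableSet_Ioc (hw c x) hum (fun x _ => hb x), h2⟩
    exact ⟨⟨fun c x => hp.integrableOn_mul (hk c x), h1⟩, hp⟩

lemma sol_unique {μ : Measure ℝ} {k w u u1 : ℝ → ℂ}
    (hk : ∀ c x, IntegrableOn k (Set.Ioc c x) volume) (hw : Integrable w μ)
    (h1 : Prim volume u (fun t => k t * u1 t)) (h2 : Prim μ u1 (fun t => w t * u t))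
    {x0 : ℝ} (hx0 : u x0 = 0 ∧ u1 x0 = 0) : ∀ x, u x = 0 ∧ u1 x = 0 := by
  set Q := ∫ t, ‖w t‖ ∂μ with hQ
  have hQ0 : 0 ≤ Q := integral_nonneg fun _ => norm_nonneg _
  have hloc : ∀ c d, c ≤ d → (∫ t in Set.Ioc c d, ‖k t‖) * Q < 1 → ∀ y ∈ Set.Icc c d,
      u y = 0 ∧ u1 y = 0 → ∀ x ∈ Set.Icc c d, u x = 0 ∧ u1 x = 0 := by
    intro c d hcd hsm y hy hy0
    obtain ⟨s, hs, hmax⟩ := (isCompact_Icc (a := c) (b := d)).exists_isMaxOn ⟨y, hy⟩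
      (h1.continuous.norm.continuousOn)
    have hM : ∀ t ∈ Set.Icc c d, ‖u t‖ ≤ ‖u s‖ := fun t ht => hmax ht
    have hu1 : ∀ t ∈ Set.Icc c d, ‖u1 t‖ ≤ Q * ‖u s‖ := by
      intro t ht
      have := h2.norm_sub_le (g := fun t => ‖w t‖ * ‖u s‖) (c := c) (d := d)
        (hw.norm.mul_const _).integrableOn (fun t => by positivity)
        (fun t ht => by
          rw [norm_mul]
          exact mul_le_mul_of_nonneg_left (hM t (Set.Ioc_subset_Icc_self ht)) (norm_nonneg _)) ht hy
      rw [hy0.2, sub_zero, integral_mul_const] at this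
      refine this.trans (mul_le_mul_of_nonneg_right ?_ (norm_nonneg _))
      exact setIntegral_le_integral hw.norm (Eventually.of_forall fun _ => norm_nonneg _)
    have hus : ‖u s‖ ≤ (∫ t in Set.Ioc c d, ‖k t‖) * (Q * ‖u s‖) := by
      have := h1.norm_sub_le (g := fun t => ‖k t‖ * (Q * ‖u s‖)) (c := c) (d := d)
        ((hk c d).norm.mul_const _) (fun t => by positivity)
        (fun t ht => by
          rw [norm_mul]
          exact mul_le_mul_of_nonneg_left (hu1 t (Set.Ioc_subset_Icc_self ht)) (norm_nonneg _)) hs hy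
      rwa [hy0.1, sub_zero, integral_mul_const] at this
    have hs0 : ‖u s‖ = 0 := by
      by_contra hne
      have hpos : 0 < ‖u s‖ := lt_of_le_of_ne (norm_nonneg _) (Ne.symm hne)
      nlinarith
    intro x hx
    have a1 := hM x hx
    have a2 := hu1 x hx
    rw [hs0] at a1 a2
    exact ⟨norm_le_zero_iff.1 a1, norm_le_zero_iff.1 (by simpa using a2)⟩
  have hcont : Continuous fun x => ∫ t in (0:ℝ)..x, ‖k t‖ :=
    intervalIntegral.continuous_primitive
      (fun a b => ⟨(hk a b).norm, (hk b a).norm⟩) 0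
  have hnb : ∀ y : ℝ, ∃ ε > 0, (∫ t in Set.Ioc (y-ε) (y+ε), ‖k t‖) * Q < 1 := by
    intro y
    have hc2 : Continuous fun ε : ℝ => ((∫ t in (0:ℝ)..(y+ε), ‖k t‖) - ∫ t in (0:ℝ)..(y-ε), ‖k t‖) * Q := by
      have := hcont.comp (continuous_const_add y)
      have h' := hcont.comp (continuous_sub_left y)
      exact (this.sub h').mul continuous_const
    have : ∀ᶠ ε in nhds (0:ℝ), ((∫ t in (0:ℝ)..(y+ε), ‖k t‖) - ∫ t in (0:ℝ)..(y-ε), ‖k t‖) * Q < 1 := by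
      apply hc2.continuousAt.eventually_lt continuousAt_const
      simp
    obtain ⟨ε, hε, hlt⟩ := ((this.filter_mono nhdsWithin_le_nhds).and
      (self_mem_nhdsWithin : Set.Ioi (0:ℝ) ∈ nhdsWithin 0 (Set.Ioi 0))).exists
    refine ⟨ε, hlt, ?_⟩
    have hlt' : 0 < ε := hlt
    rwa [intervalIntegral.integral_interval_sub_left ⟨(hk _ _).norm, (hk _ _).norm⟩
      ⟨(hk _ _).norm, (hk _ _).norm⟩, intervalIntegral.integral_of_le (by linarith)] at hε
  have hclopen : IsClopen {x | u x = 0 ∧ u1 x = 0} := by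
    constructor
    · rw [← isOpen_compl_iff, Metric.isOpen_iff]
      intro y hy
      obtain ⟨ε, hε, hlt⟩ := hnb y
      refine ⟨ε, hε, fun t ht hz => hy ?_⟩
      rw [Metric.mem_ball, Real.dist_eq, abs_lt] at ht
      exact hloc _ _ (by linarith) hlt t ⟨by linarith, by linarith⟩ hz y ⟨by linarith, by linarith⟩
    · rw [Metric.isOpen_iff]
      intro y hy
      obtain ⟨ε, hε, hlt⟩ := hnb y
      refine ⟨ε, hε, fun t ht => ?_⟩
      rw [Metric.mem_ball, Real.dist_eq, abs_lt] at ht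
      exact hloc _ _ (by linarith) hlt y ⟨by linarith, by linarith⟩ hy t ⟨by linarith, by linarith⟩
  have := hclopen.eq_univ ⟨x0, hx0⟩
  intro x
  have hx : x ∈ {x | u x = 0 ∧ u1 x = 0} := this ▸ Set.mem_univ x
  exact hx

lemma Prim.parts {m n : Measure ℝ} [IsLocallyFiniteMeasure m] [IsLocallyFiniteMeasure n]
    {U f V k : ℝ → ℂ} (hU : Prim m U f) (hV : Prim n V k) {c x : ℝ} (hcx : c ≤ x) :
    IntegrableOn (fun t => f t * (V t - k t * (n.real {t} : ℂ))) (Set.Ioc c x) m ∧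
    U x * V x = U c * V c + (∫ t in Set.Ioc c x, k t * U t ∂n)
      + ∫ t in Set.Ioc c x, f t * (V t - k t * (n.real {t} : ℂ)) ∂m := by
  set I := Set.Ioc c x with hI
  have hf := hU.1 c x
  have hk := hV.1 c x
  have hprod : Integrable (fun z : ℝ × ℝ => f z.1 * k z.2) ((m.restrict I).prod (n.restrict I)) :=
    Integrable.mul_prod hf hk
  set A : Set (ℝ × ℝ) := {z | z.1 ≤ z.2} with hA
  have hAm : MeasurableSet A := measurableSet_le measurable_fst measurable_snd
  have i1 := hprod.indicator hAm
  have i2 := hprod.indicator hAm.compl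
  have hsum : (∫ z, A.indicator (fun z : ℝ × ℝ => f z.1 * k z.2) z ∂((m.restrict I).prod (n.restrict I)))
      + (∫ z, Aᶜ.indicator (fun z : ℝ × ℝ => f z.1 * k z.2) z ∂((m.restrict I).prod (n.restrict I)))
      = (∫ t in I, f t ∂m) * ∫ t in I, k t ∂n := by
    rw [← integral_add i1 i2, ← integral_prod_mul]
    congr 1; ext z; by_cases hz : z ∈ A <;> simp [hz]
  have e1 : (∫ z, A.indicator (fun z : ℝ × ℝ => f z.1 * k z.2) z ∂((m.restrict I).prod (n.restrict I)))
      = ∫ t in I, k t * (U t - U c) ∂n := by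
    rw [integral_prod_symm _ i1]
    refine setIntegral_congr_fun measurableSet_Ioc fun t ht => ?_
    have : ∀ s, A.indicator (fun z : ℝ × ℝ => f z.1 * k z.2) (s, t)
        = k t * (Set.Iic t).indicator f s := by
      intro s; by_cases hs : s ≤ t <;> simp [hA, hs, mul_comm]
    simp only [this]
    rw [integral_const_mul, integral_indicator measurableSet_Iic,
      Measure.restrict_restrict measurableSet_Iic]
    have : Set.Iic t ∩ I = Set.Ioc c t := by
      ext s; simp only [hI, Set.mem_inter_iff, Set.mem_Iic, Set.mem_Ioc]
      exact ⟨fun h => ⟨h.2.1, h.1⟩, fun h => ⟨h.2, h.1, h.2.trans ht.2⟩⟩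
    rw [this, hU.2 c t ht.1.le, add_sub_cancel_left]
  have e2' : ∀ s ∈ I, (∫ t in I, Aᶜ.indicator (fun z : ℝ × ℝ => f z.1 * k z.2) (s, t) ∂n)
      = f s * (V s - k s * (n.real {s} : ℂ) - V c) := by
    intro s hs
    have : ∀ t, Aᶜ.indicator (fun z : ℝ × ℝ => f z.1 * k z.2) (s, t)
        = f s * (Set.Iio s).indicator k t := by
      intro t; by_cases hs : t < s
      · simp [hA, hs]
      · simp [hA, hs, not_lt.1 hs]
    simp only [this]
    rw [integral_const_mul, integral_indicator measurableSet_Iio,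
      Measure.restrict_restrict measurableSet_Iio]
    have h1 : Set.Iio s ∩ I = Set.Ioo c s := by
      ext t; simp only [hI, Set.mem_inter_iff, Set.mem_Iio, Set.mem_Ioc, Set.mem_Ioo]
      exact ⟨fun h => ⟨h.2.1, h.1⟩, fun h => ⟨h.2, h.1, h.2.le.trans hs.2⟩⟩
    have h2 : Set.Ioc c s = Set.Ioo c s ∪ {s} := (Set.Ioo_union_right hs.1).symm
    have h3 : ∫ t in Set.Ioc c s, k t ∂n = (∫ t in Set.Ioo c s, k t ∂n) + k s * (n.real {s} : ℂ) := by
      rw [h2, setIntegral_union (by simp) (measurableSet_singleton s)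
        ((hV.1 c s).mono_set Set.Ioo_subset_Ioc_self)
        ((hV.1 c s).mono_set (by simpa using hs.1)), integral_singleton]
      simp [mul_comm]
    rw [h1, hV.2 c s hs.1.le, h3]; ring
  have e2 : (∫ z, Aᶜ.indicator (fun z : ℝ × ℝ => f z.1 * k z.2) z ∂((m.restrict I).prod (n.restrict I)))
      = ∫ s in I, f s * (V s - k s * (n.real {s} : ℂ) - V c) ∂m := by
    rw [integral_prod _ i2]
    exact setIntegral_congr_fun measurableSet_Ioc fun s hs => e2' s hs
  have j2 : IntegrableOn (fun s => f s * (V s - k s * (n.real {s} : ℂ) - V c)) I m := by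
    refine i2.integral_prod_left.congr ?_
    exact (ae_restrict_iff' measurableSet_Ioc).2 (Eventually.of_forall e2')
  have j3 : IntegrableOn (fun t => f t * (V t - k t * (n.real {t} : ℂ))) I m := by
    have := j2.add (hf.mul_const (V c))
    refine this.congr (Eventually.of_forall fun t => ?_)
    simp only [Pi.add_apply]; ring
  refine ⟨j3, ?_⟩
  have s1 : ∫ t in I, k t * (U t - U c) ∂n = (∫ t in I, k t * U t ∂n) - (∫ t in I, k t ∂n) * U c := by
    rw [← integral_mul_const, ← integral_sub (hU.integrableOn_mul hk) (hk.mul_const _)]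
    congr 1; ext t; ring
  have s2 : ∫ s in I, f s * (V s - k s * (n.real {s} : ℂ) - V c) ∂m
      = (∫ t in I, f t * (V t - k t * (n.real {t} : ℂ)) ∂m) - (∫ t in I, f t ∂m) * V c := by
    rw [← integral_mul_const, ← integral_sub j3 (hf.mul_const _)]
    congr 1; ext t; ring
  rw [e1, e2, s1, s2] at hsum
  rw [hU.2 c x hcx, hV.2 c x hcx]
  linear_combination -hsum

lemma Prim.parts_vol {m : Measure ℝ} [IsLocallyFiniteMeasure m]
    {U f V k : ℝ → ℂ} (hU : Prim m U f) (hV : Prim volume V k) {c x : ℝ} (hcx : c ≤ x) :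
    U x * V x = U c * V c + (∫ t in Set.Ioc c x, k t * U t)
      + ∫ t in Set.Ioc c x, f t * V t ∂m := by
  simpa [Measure.real] using (hU.parts hV hcx).2
/-- Basic facts on `𝕋_κ`. -/
structure KFacts (T : Set ℝ) (α b : ℝ) : Prop where
  closed : IsClosed (tsKappa T)
  left : α ∈ tsKappa T
  right : b ∈ tsKappa T
  lb : ∀ s ∈ tsKappa T, α ≤ s
  ub : ∀ s ∈ tsKappa T, s ≤ b
  mid : ∃ s ∈ tsKappa T, α < s ∧ s < b
  sub : tsKappa T ⊆ T
  mem : ∀ s ∈ T, sInf T < s → s ∈ tsKappa T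
  infle : sInf T ≤ α
  infmem : sInf T ∈ T
  le_sup : ∀ s ∈ T, s ≤ b
  ge_inf : ∀ s ∈ T, sInf T ≤ s
  supK : sSup (tsKappa T) = b

lemma kfacts (T : Set ℝ) (hne : T.Nonempty) (hcl : IsClosed T)
    (hbb : BddBelow T) (hba : BddAbove T)
    (hfive : ∃ s : Finset ℝ, ↑s ⊆ T ∧ 5 ≤ s.card) :
    KFacts T (tsSigma T (sInf T)) (sSup T) := by
  have haT : sInf T ∈ T := hcl.csInf_mem hne hbb
  have hbT : sSup T ∈ T := hcl.csSup_mem hne hba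
  have hge : ∀ s ∈ T, sInf T ≤ s := fun s hs => csInf_le hbb hs
  have hle : ∀ s ∈ T, s ≤ sSup T := fun s hs => le_csSup hba hs
  set a := sInf T with ha
  set b := sSup T with hb
  set α := tsSigma T a with hα
  obtain ⟨x0, hx0T, hx0a, hx0α, hx0b⟩ : ∃ x ∈ T, x ≠ a ∧ x ≠ α ∧ x ≠ b := by
    obtain ⟨s, hs, hcard⟩ := hfive
    have : ∃ x ∈ s, x ∉ ({a, α, b} : Finset ℝ) := by
      by_contra hcon
      push Not at hcon
      have h1 := Finset.card_le_card (show s ⊆ {a, α, b} from hcon)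
      have h2 : ({a, α, b} : Finset ℝ).card ≤ 3 := Finset.card_le_three
      omega
    obtain ⟨x, hx, hx'⟩ := this
    simp only [Finset.mem_insert, Finset.mem_singleton, not_or] at hx'
    exact ⟨x, hs hx, hx'⟩
  have hax0 : a < x0 := lt_of_le_of_ne (hge _ hx0T) (Ne.symm hx0a)
  have hx0b' : x0 < b := lt_of_le_of_ne (hle _ hx0T) hx0b
  have hne' : ({s | s ∈ T ∧ a < s}).Nonempty := ⟨x0, hx0T, hax0⟩
  have hαe : α = sInf {s | s ∈ T ∧ a < s} := by rw [hα, tsSigma, if_pos hne']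
  have hbd : BddBelow {s | s ∈ T ∧ a < s} := ⟨a, fun s hs => hs.2.le⟩
  have hαle : ∀ s ∈ T, a < s → α ≤ s := fun s hs h => hαe ▸ csInf_le hbd ⟨hs, h⟩
  have haα : a ≤ α := by rw [hαe]; exact le_csInf hne' fun s hs => hs.2.le
  have hαT : α ∈ T := by
    have h1 := csInf_mem_closure hne' hbd
    rw [← hαe] at h1
    exact hcl.closure_subset (closure_mono (fun s hs => hs.1) h1)
  have hαx0 : α < x0 := lt_of_le_of_ne (hαle _ hx0T hax0) (Ne.symm hx0α)
  have main : IsClosed (tsKappa T) ∧ α ∈ tsKappa T ∧ (∀ s ∈ tsKappa T, α ≤ s) ∧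
      tsKappa T ⊆ T ∧ (∀ s ∈ T, a < s → s ∈ tsKappa T) := by
    by_cases hc : a < α
    · have hK : tsKappa T = T \ {a} := by rw [tsKappa, if_pos ⟨hbb, hc⟩]
      have hK2 : tsKappa T = T ∩ Set.Ici α := by
        rw [hK]; ext s
        simp only [Set.mem_sdiff, Set.mem_singleton_iff, Set.mem_inter_iff, Set.mem_Ici]
        refine and_congr_right fun hs => ⟨fun h => hαle s hs (lt_of_le_of_ne (hge s hs) (Ne.symm h)),
          fun h => (hc.trans_le h).ne'⟩
      refine ⟨hK2 ▸ hcl.inter isClosed_Ici, hK2 ▸ ⟨hαT, Set.mem_Ici.2 le_rfl⟩, fun s hs => ?_, ?_, ?_⟩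
      · rw [hK2] at hs; exact hs.2
      · rw [hK]; exact Set.sdiff_subset
      · intro s hs h; rw [hK]; exact ⟨hs, h.ne'⟩
    · have hK : tsKappa T = T := by rw [tsKappa, if_neg (fun h => hc h.2)]
      have : α = a := le_antisymm (not_lt.1 hc) haα
      rw [hK]
      exact ⟨hcl, hαT, fun s hs => this ▸ hge s hs, subset_rfl, fun s hs _ => hs⟩
  obtain ⟨k1, k2, k3, k4, k5⟩ := main
  have hbK := k5 b hbT (hax0.trans hx0b')
  refine ⟨k1, k2, hbK, k3, fun s hs => hle s (k4 hs), ⟨x0, k5 _ hx0T hax0, hαx0, hx0b'⟩,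
    k4, k5, haα, haT, hle, hge, ?_⟩
  exact IsGreatest.csSup_eq ⟨hbK, fun s hs => hle s (k4 hs)⟩

namespace KFacts

variable {T : Set ℝ} {α b : ℝ}

lemma sig_pos (h : KFacts T α b) {t : ℝ} (ht : t < b) :
    tsSigma (tsKappa T) t = sInf {s | s ∈ tsKappa T ∧ t < s} := by
  rw [tsSigma, if_pos ⟨b, h.right, ht⟩]

lemma sig_neg (h : KFacts T α b) {t : ℝ} (ht : b ≤ t) : tsSigma (tsKappa T) t = b := by
  rw [tsSigma, if_neg, h.supK]
  rintro ⟨s, hs, hts⟩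
  linarith [h.ub s hs]

lemma sig_le (_h : KFacts T α b) {t s : ℝ} (hs : s ∈ tsKappa T) (hts : t < s) :
    tsSigma (tsKappa T) t ≤ s := by
  rw [tsSigma, if_pos ⟨s, hs, hts⟩]
  exact csInf_le ⟨t, fun x hx => hx.2.le⟩ ⟨hs, hts⟩

lemma le_sig (h : KFacts T α b) {t : ℝ} (ht : t ≤ b) : t ≤ tsSigma (tsKappa T) t := by
  rcases lt_or_eq_of_le ht with ht | rfl
  · rw [h.sig_pos ht]; exact le_csInf ⟨b, h.right, ht⟩ fun s hs => hs.2.le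
  · rw [h.sig_neg le_rfl]

lemma sig_mem (h : KFacts T α b) (t : ℝ) : tsSigma (tsKappa T) t ∈ tsKappa T := by
  rcases lt_or_ge t b with ht | ht
  · rw [h.sig_pos ht]
    have h1 := csInf_mem_closure (s := {s | s ∈ tsKappa T ∧ t < s}) ⟨b, h.right, ht⟩
      ⟨t, fun s hs => hs.2.le⟩
    exact h.closed.closure_subset (closure_mono (fun s hs => hs.1) h1)
  · rw [h.sig_neg ht]; exact h.right

lemma sig_left (h : KFacts T α b) {t : ℝ} (ht : t < α) : tsSigma (tsKappa T) t = α :=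
  le_antisymm (h.sig_le h.left ht) (h.lb _ (h.sig_mem t))

variable {μ : Measure ℝ}

lemma null_compl (h : KFacts T α b)
    (hμ : ∀ c d : ℝ, c ≤ d →
      μ (Set.Ioc c d) = ENNReal.ofReal (tsSigma (tsKappa T) d - tsSigma (tsKappa T) c)) :
    μ (tsKappa T)ᶜ = 0 := by
  refine measure_null_of_locally_null _ fun x hx => ?_
  obtain ⟨ε, hε, hb⟩ := Metric.isOpen_iff.1 h.closed.isOpen_compl x hx
  refine ⟨Set.Ioc (x - ε/2) (x + ε/2), mem_nhdsWithin_of_mem_nhds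
    (Ioc_mem_nhds (by linarith) (by linarith)), ?_⟩
  rw [hμ _ _ (by linarith)]
  have : {s | s ∈ tsKappa T ∧ x + ε/2 < s} = {s | s ∈ tsKappa T ∧ x - ε/2 < s} := by
    ext s
    simp only [Set.mem_ofPred_eq]
    refine and_congr_right fun hs => ⟨fun h => by linarith, fun h => ?_⟩
    by_contra hcon
    refine hb ?_ hs
    rw [Metric.mem_ball, Real.dist_eq, abs_lt]
    constructor <;> linarith
  simp only [tsSigma, this, sub_self, ENNReal.ofReal_zero]

lemma restrict_eq (h : KFacts T α b)
    (hμ : ∀ c d : ℝ, c ≤ d →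
      μ (Set.Ioc c d) = ENNReal.ofReal (tsSigma (tsKappa T) d - tsSigma (tsKappa T) c)) :
    μ.restrict (tsKappa T) = μ :=
  Measure.restrict_eq_self_of_ae_mem (mem_ae_iff.2 (h.null_compl hμ))

lemma finite (h : KFacts T α b)
    (hμ : ∀ c d : ℝ, c ≤ d →
      μ (Set.Ioc c d) = ENNReal.ofReal (tsSigma (tsKappa T) d - tsSigma (tsKappa T) c)) :
    IsFiniteMeasure μ := by
  constructor
  rw [← h.restrict_eq hμ, Measure.restrict_apply_univ]
  have hab : α ≤ b := h.lb b h.right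
  refine (measure_mono (t := Set.Ioc (α - 1) b)
    fun s hs => ⟨by linarith [h.lb s hs], h.ub s hs⟩).trans_lt ?_
  rw [hμ _ _ (by linarith)]
  exact ENNReal.ofReal_lt_top

lemma null_right (h : KFacts T α b)
    (hμ : ∀ c d : ℝ, c ≤ d →
      μ (Set.Ioc c d) = ENNReal.ofReal (tsSigma (tsKappa T) d - tsSigma (tsKappa T) c)) :
    μ {b} = 0 := by
  refine le_antisymm (ENNReal.le_of_forall_pos_le_add fun ε hε _ => ?_) zero_le
  have hε' : (0:ℝ) < ε := hε
  rw [zero_add]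
  refine (measure_mono (t := Set.Ioc (b - ε) b) (by simpa using hε')).trans ?_
  rw [hμ _ _ (by linarith), h.sig_neg le_rfl]
  have := h.le_sig (t := b - ε) (by linarith)
  rw [← ENNReal.ofReal_coe_nnreal]
  exact ENNReal.ofReal_le_ofReal (by linarith)

lemma eq_zero_of_ae (h : KFacts T α b)
    (hμ : ∀ c d : ℝ, c ≤ d →
      μ (Set.Ioc c d) = ENNReal.ofReal (tsSigma (tsKappa T) d - tsSigma (tsKappa T) c))
    {u : ℝ → ℂ} (hu : Continuous u) (hz : ∀ᵐ t ∂μ, u t = 0) {t : ℝ} (ht : t ∈ tsKappa T)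
    (htb : t < b) : u t = 0 := by
  by_contra hne
  have hop : IsOpen {x | u x ≠ 0} := isOpen_ne_fun hu continuous_const
  obtain ⟨ε, hε, hb⟩ := Metric.isOpen_iff.1 hop t hne
  have h0 : μ (Set.Ioc (t - ε/2) (t + ε/2)) = 0 := by
    refine measure_mono_null (fun x hx => ?_) (ae_iff.1 hz)
    refine hb ?_
    rw [Metric.mem_ball, Real.dist_eq, abs_lt]
    constructor <;> linarith [hx.1, hx.2]
  rw [hμ _ _ (by linarith), ENNReal.ofReal_eq_zero] at h0
  have h1 := h.sig_le ht (show t - ε/2 < t by linarith)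
  have h2 : t < tsSigma (tsKappa T) (t + ε/2) := by
    rcases le_total (t + ε/2) b with h3 | h3
    · linarith [h.le_sig h3]
    · rw [h.sig_neg h3]; exact htb
  linarith

lemma pbar (h : KFacts T α b) {ν : Measure ℝ}
    (hν : ∀ c d : ℝ, c ≤ d → ν (Set.Ico c d) = ENNReal.ofReal (tsRho T d - tsRho T c))
    {p : ℝ → ℝ} (hpne : ∀ᵐ t ∂ν, p t ≠ 0) (hp : Integrable (fun t => 1 / p t) ν) :
    (∀ c x, IntegrableOn (fun t => 1 / extK T (cR p) t) (Set.Ioc c x) volume) ∧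
    ∀ᵐ t ∂(volume.restrict (Set.Ioc (sInf T) b)), extK T (cR p) t ≠ 0 := by
  set a := sInf T with ha
  set τ : ℝ → ℝ := fun t => if t ∈ tsKappa T then t else tsSigma (tsKappa T) t with hτ
  have hext : ∀ t, extK T (cR p) t = ((p (τ t) : ℝ) : ℂ) := by
    intro t; simp only [extK, cR, hτ]; split_ifs <;> rfl
  have τmem : ∀ t, τ t ∈ T := by
    intro t; simp only [hτ]; split_ifs with ht
    · exact h.sub ht
    · exact h.sub (h.sig_mem t)
  have τge : ∀ t, t ≤ b → t ≤ τ t := by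
    intro t htb; simp only [hτ]; split_ifs with ht
    · exact le_rfl
    · exact h.le_sig htb
  have τle : ∀ t s, a < t → s ∈ T → t ≤ s → τ t ≤ s := by
    intro t s hat hs hts
    have hsK := h.mem s hs (hat.trans_le hts)
    simp only [hτ]; split_ifs with ht
    · exact hts
    · exact h.sig_le hsK (lt_of_le_of_ne hts (fun e => ht (e ▸ hsK)))
  have hmono : MonotoneOn τ (Set.Ioc a b) := fun s hs t ht hst =>
    τle s _ hs.1 (τmem t) (hst.trans (τge t ht.2))
  have hτm : AEMeasurable τ (volume.restrict (Set.Ioc a b)) :=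
    aemeasurable_restrict_of_monotoneOn measurableSet_Ioc hmono
  have ρge : ∀ d, a ≤ tsRho T d := by
    intro d; rw [tsRho]; split_ifs with hd
    · obtain ⟨s, hs⟩ := hd
      exact (h.ge_inf s hs.1).trans (le_csSup ⟨d, fun x hx => hx.2.le⟩ hs)
    · exact le_rfl
  have ρle : ∀ d, tsRho T d ≤ b := by
    intro d; rw [tsRho]; split_ifs with hd
    · exact csSup_le hd fun s hs => h.le_sup s hs.1
    · exact h.le_sup _ h.infmem
  have ρge' : ∀ s d, s ∈ T → s < d → s ≤ tsRho T d := by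
    intro s d hs hsd
    rw [tsRho, if_pos ⟨s, hs, hsd⟩]
    exact le_csSup ⟨d, fun x hx => hx.2.le⟩ ⟨hs, hsd⟩
  have ρlt : ∀ t d, a ≤ t → t < tsRho T d → ∃ s ∈ T, t < s ∧ s < d := by
    intro t d hat htd
    rw [tsRho] at htd; split_ifs at htd with hd
    · obtain ⟨s, hs, hts⟩ := exists_lt_of_lt_csSup hd htd
      exact ⟨s, hs.1, hts, hs.2⟩
    · linarith
  have hmap : (volume.restrict (Set.Ioc a b)).map τ = ν := by
    have key : ∀ c d : ℝ, c < d → (volume.restrict (Set.Ioc a b)).map τ (Set.Ico c d)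
        = ν (Set.Ico c d) := by
      intro c d hcd
      rw [Measure.map_apply_of_aemeasurable hτm measurableSet_Ico,
        Measure.restrict_apply' measurableSet_Ioc, hν c d hcd.le]
      apply le_antisymm
      · rw [← Real.volume_Icc]
        refine measure_mono ?_
        rintro t ⟨⟨h1, h2⟩, h3, h4⟩
        refine ⟨?_, (τge t h4).trans (ρge' _ _ (τmem t) h2)⟩
        by_contra hcon
        obtain ⟨s, hs, hts, hsc⟩ := ρlt t c h3.le (not_le.1 hcon)
        have := τle t s h3 hs hts.le
        linarith
      · rw [← Real.volume_Ioo]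
        refine measure_mono ?_
        rintro t ⟨h1, h2⟩
        have hat : a < t := (ρge c).trans_lt h1
        have htb : t ≤ b := h2.le.trans (ρle d)
        refine ⟨⟨?_, ?_⟩, hat, htb⟩
        · by_contra hcon
          have := ρge' _ _ (τmem t) (not_le.1 hcon)
          linarith [τge t htb]
        · obtain ⟨s, hs, hts, hsc⟩ := ρlt t d hat.le h2
          exact (τle t s hat hs hts.le).trans_lt hsc
    refine Measure.ext_of_Ico' _ _ (fun c d hcd => ?_) (fun c d hcd => key c d hcd)
    rw [key c d hcd, hν c d hcd.le]; exact ENNReal.ofReal_ne_top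
  have hmid : IntegrableOn (fun t => 1 / extK T (cR p) t) (Set.Ioc a b) volume := by
    rw [← hmap] at hp
    have := (hp.comp_aemeasurable hτm).ofReal (𝕜 := ℂ)
    refine this.congr (Eventually.of_forall fun t => ?_)
    simp [hext]
  constructor
  · intro c x
    have hl : IntegrableOn (fun t => 1 / extK T (cR p) t) (Set.Ioc c a) volume := by
      have h1 : IntegrableOn (fun _ : ℝ => 1 / ((p α : ℝ) : ℂ)) (Set.Ioo c a) volume :=
        integrableOn_const (by simp)
      rw [integrableOn_Ioc_iff_integrableOn_Ioo]
      refine h1.congr_fun (fun t ht => ?_) measurableSet_Ioo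
      have hta : t < α := ht.2.trans_le h.infle
      have htK : t ∉ tsKappa T := fun hh => by linarith [h.lb t hh]
      simp [hext, hτ, htK, h.sig_left hta]
    have hr : IntegrableOn (fun t => 1 / extK T (cR p) t) (Set.Ioc b x) volume := by
      have h1 : IntegrableOn (fun _ : ℝ => 1 / ((p b : ℝ) : ℂ)) (Set.Ioc b x) volume :=
        integrableOn_const (by simp)
      refine h1.congr_fun (fun t ht => ?_) measurableSet_Ioc
      have htK : t ∉ tsKappa T := fun hh => by linarith [h.ub t hh, ht.1]
      simp [hext, hτ, htK, h.sig_neg ht.1.le]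
    refine ((hl.union hmid).union hr).mono_set fun t ht => ?_
    simp only [Set.mem_union, Set.mem_Ioc]
    rcases le_or_gt t a with h1 | h1
    · exact Or.inl (Or.inl ⟨ht.1, h1⟩)
    · rcases le_or_gt t b with h2 | h2
      · exact Or.inl (Or.inr ⟨h1, h2⟩)
      · exact Or.inr ⟨h2, ht.2⟩
  · rw [← hmap] at hpne
    filter_upwards [ae_of_ae_map hτm hpne] with t ht
    rw [hext]; exact_mod_cast ht

end KFacts
lemma trivial_of_ae_zero {T : Set ℝ} {α b : ℝ} (h : KFacts T α b) {μ : Measure ℝ}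
    (hμ : ∀ c d : ℝ, c ≤ d →
      μ (Set.Ioc c d) = ENNReal.ofReal (tsSigma (tsKappa T) d - tsSigma (tsKappa T) c))
    {P w u u1 : ℝ → ℂ}
    (hk : ∀ c x, IntegrableOn (fun t => 1 / extK T P t) (Set.Ioc c x) volume)
    (hkne : ∀ᵐ t ∂(volume.restrict (Set.Ioc (sInf T) b)), extK T P t ≠ 0)
    (hw : Integrable w μ)
    (h1 : Prim volume u (fun t => 1 / extK T P t * u1 t)) (h2 : Prim μ u1 (fun t => w t * u t))
    (hz : ∀ᵐ t ∂μ, u t = 0) : ∀ x, u x = 0 ∧ u1 x = 0 := by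
  obtain ⟨x0, hx0K, hαx0, hx0b⟩ := h.mid
  have hu0 : ∀ t ∈ tsKappa T, t < b → u t = 0 := fun t ht htb =>
    h.eq_zero_of_ae hμ h1.continuous hz ht htb
  have hc : ∀ c x, c ≤ x → u1 x = u1 c := by
    intro c x hcx
    rw [h2.2 c x hcx, integral_eq_zero_of_ae, add_zero]
    refine ae_restrict_of_ae ?_
    filter_upwards [hz] with t ht
    simp [ht]
  set c1 := u1 0 with hc1
  have hconst : ∀ x, u1 x = c1 := by
    intro x
    rcases le_total 0 x with hx | hx
    · exact hc 0 x hx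
    · exact (hc x 0 hx).symm
  have hsubs : ∀ s t, α ≤ s → t ≤ b → Set.Ioo s t ⊆ Set.Ioc (sInf T) b := fun s t hs ht y hy =>
    ⟨(h.infle.trans hs).trans_lt hy.1, hy.2.le.trans ht⟩
  have hzero : c1 = 0 := by
    by_cases hgap : ∃ t ∈ Set.Ioo α x0, t ∉ tsKappa T
    · obtain ⟨t, ht, htK⟩ := hgap
      have hbd : BddAbove (tsKappa T ∩ Set.Iic t) := ⟨t, fun y hy => hy.2⟩
      have hne : (tsKappa T ∩ Set.Iic t).Nonempty := ⟨α, h.left, ht.1.le⟩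
      set s := sSup (tsKappa T ∩ Set.Iic t) with hs
      have hsm : s ∈ tsKappa T ∩ Set.Iic t := (h.closed.inter isClosed_Iic).csSup_mem hne hbd
      have hst : s < t := lt_of_le_of_ne hsm.2 (fun e => htK (e ▸ hsm.1))
      set s' := tsSigma (tsKappa T) t with hs'
      have hs'x0 : s' ≤ x0 := h.sig_le hx0K ht.2
      have hts' : t < s' := lt_of_le_of_ne (h.le_sig (ht.2.trans hx0b).le)
        (fun e => htK (e ▸ h.sig_mem t))
      have hgapK : ∀ y ∈ Set.Ioo s s', y ∉ tsKappa T := by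
        intro y hy hyK
        rcases le_or_gt y t with hyt | hyt
        · have := le_csSup hbd ⟨hyK, hyt⟩
          linarith [hy.1]
        · have := h.sig_le hyK hyt
          linarith [hy.2]
      have hsig : ∀ y ∈ Set.Ioo s s', tsSigma (tsKappa T) y = s' := by
        intro y hy
        refine le_antisymm (h.sig_le (h.sig_mem t) hy.2) ?_
        have h3 : y ≤ tsSigma (tsKappa T) y := h.le_sig (by linarith [hy.2])
        rcases le_or_gt (tsSigma (tsKappa T) y) t with h4 | h4
        · have := le_csSup hbd ⟨h.sig_mem y, h4⟩
          linarith [hy.1]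
        · exact h.sig_le (h.sig_mem y) h4
      have hext : ∀ y ∈ Set.Ioo s s', extK T P y = P s' := by
        intro y hy; rw [extK, if_neg (hgapK y hy), hsig y hy]
      have hP : P s' ≠ 0 := by
        have hae := ae_restrict_of_ae_restrict_of_subset
          (hsubs s s' (h.lb s hsm.1) (by linarith)) hkne
        have hpos : (volume.restrict (Set.Ioo s s')) ≠ 0 := by
          rw [Ne, Measure.restrict_eq_zero, Real.volume_Ioo, ENNReal.ofReal_eq_zero]
          linarith
        haveI : (ae (volume.restrict (Set.Ioo s s'))).NeBot := ae_neBot.2 hpos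
        obtain ⟨y, hy, hyI⟩ := (hae.and (ae_restrict_mem measurableSet_Ioo)).exists
        rwa [hext y hyI] at hy
      have e := h1.2 s s' (hst.trans hts').le
      rw [hu0 s hsm.1 (by linarith), hu0 s' (h.sig_mem t) (by linarith), zero_add,
        integral_Ioc_eq_integral_Ioo,
        setIntegral_congr_fun (g := fun _ => 1 / P s' * c1) measurableSet_Ioo
          (fun y hy => by simp only [hext y hy, hconst y]), setIntegral_const] at e
      have h5 : (volume.real (Set.Ioo s s')) ≠ 0 := by
        rw [Real.volume_real_Ioo_of_le (hst.trans hts').le]; linarith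
      rw [eq_comm, smul_eq_zero] at e
      rcases e with e | e
      · exact absurd e h5
      · rcases mul_eq_zero.1 e with e | e
        · exact absurd e (one_div_ne_zero hP)
        · exact e
    · push Not at hgap
      have hint : IntervalIntegrable (fun t => 1 / extK T P t * u1 t) volume α x0 :=
        ⟨h1.1 _ _, h1.1 _ _⟩
      have hder := hint.ae_hasDerivAt_integral
      have hae := ae_restrict_of_ae_restrict_of_subset
          (hsubs α x0 le_rfl hx0b.le) hkne
      have hpos : (volume.restrict (Set.Ioo α x0)) ≠ 0 := by
        rw [Ne, Measure.restrict_eq_zero, Real.volume_Ioo, ENNReal.ofReal_eq_zero]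
        linarith
      haveI : (ae (volume.restrict (Set.Ioo α x0))).NeBot := ae_neBot.2 hpos
      obtain ⟨y, ⟨hy, hyd⟩, hyI⟩ := ((hae.and (ae_restrict_of_ae hder)).and
        (ae_restrict_mem measurableSet_Ioo)).exists
      have hmem : ∀ x ∈ Set.Ioo α x0, x ∈ Set.uIcc α x0 := fun x hx => by
        rw [Set.uIcc_of_le hαx0.le]; exact Set.Ioo_subset_Icc_self hx
      have hd := hyd (hmem y hyI) α (Set.left_mem_uIcc)
      have hev : (fun x => ∫ t in α..x, 1 / extK T P t * u1 t) =ᶠ[nhds y] fun _ => 0 := by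
        filter_upwards [Ioo_mem_nhds hyI.1 hyI.2] with x hx
        have e := h1.2 α x hx.1.le
        rw [hu0 α h.left (by linarith), hu0 x (hgap x hx) (hx.2.trans hx0b), zero_add] at e
        rw [intervalIntegral.integral_of_le hx.1.le, ← e]
      have hd0 := (hasDerivAt_const y (0:ℂ)).congr_of_eventuallyEq hev
      have e := hd.unique hd0
      rw [hconst] at e
      rcases mul_eq_zero.1 e with e | e
      · exact absurd e (one_div_ne_zero hy)
      · exact e
  exact sol_unique hk hw h1 h2 (x0 := x0) ⟨hu0 x0 hx0K hx0b, by rw [hconst, hzero]⟩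

lemma sa_zero {E : Type*} [NormedAddCommGroup E] [InnerProductSpace ℂ E] [CompleteSpace E]
    (S : E →ₗ.[ℂ] E) (hS : IsSelfAdjoint S) {z : ℂ} (hz : z.im ≠ 0) {G : E}
    (hG : (G, z • G) ∈ S.graph) : G = 0 := by
  have hf := LinearPMap.adjoint_isFormalAdjoint hS.dense_domain
  rw [LinearPMap.isSelfAdjoint_def.1 hS] at hf
  obtain ⟨y, hy, hSy⟩ := (LinearPMap.mem_graph_iff _).1 hG
  simp only at hy hSy
  have e := hf y y
  rw [hSy, hy, inner_smul_left, inner_smul_right] at e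
  by_contra hne
  have h0 : inner ℂ G G ≠ 0 := inner_self_ne_zero.2 hne
  have := mul_right_cancel₀ h0 e
  exact hz (Complex.conj_eq_iff_im.1 this)

lemma memL2T_of_memLp {T : Set ℝ} {μ : Measure ℝ} {r : ℝ → ℝ} {u : ℝ → ℂ}
    (hr : Integrable r (μ.restrict (tsKappa T))) (hu : MemLp u 2 (wM T μ r)) :
    MemL2T T μ r u := by
  have h1 := lintegral_rpow_enorm_lt_top_of_eLpNorm_lt_top (by simp) (by simp) hu.2
  rw [wM, lintegral_withDensity_eq_lintegral_mul_non_measurable₀ _ hr.aemeasurable.ennreal_ofReal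
    (Eventually.of_forall fun _ => ENNReal.ofReal_lt_top)] at h1
  rw [MemL2T]
  refine lt_of_eq_of_lt ?_ h1
  refine lintegral_congr fun t => ?_
  simp [sqWeight, mul_comm, enorm_eq_nnnorm]

lemma memL2T_congr {T : Set ℝ} {μ : Measure ℝ} {r : ℝ → ℝ} {u v : ℝ → ℂ}
    (huv : ∀ᵐ t ∂(μ.restrict (tsKappa T)), u t = v t) (hu : MemL2T T μ r u) :
    MemL2T T μ r v := by
  refine lt_of_eq_of_lt ?_ hu
  refine lintegral_congr_ae ?_
  filter_upwards [huv] with t ht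
  simp [sqWeight, ht]

lemma green_prim {μ : Measure ℝ} [IsFiniteMeasure μ] {k w ua ua1 ub ub1 Φ : ℝ → ℂ} {W : ℂ}
    (hk : ∀ c x, IntegrableOn k (Set.Ioc c x) volume) (hw : Integrable w μ)
    (ha : Prim volume ua (fun t => k t * ua1 t)) (ha1 : Prim μ ua1 (fun t => w t * ua t))
    (hb : Prim volume ub (fun t => k t * ub1 t)) (hb1 : Prim μ ub1 (fun t => w t * ub t))
    (hΦ : Integrable Φ μ)
    (hΦa : Integrable (fun t => Φ t * ua t) μ) (hΦb : Integrable (fun t => Φ t * ub t) μ)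
    (hW : ∀ x, ub x * ua1 x - ub1 x * ua x = W) (hW0 : W ≠ 0) (A B : ℝ → ℂ)
    (hA : ∀ x, A x = ∫ t in Set.Iic x, Φ t * ua t ∂μ)
    (hB : ∀ x, B x = ∫ t in Set.Ioi x, Φ t * ub t ∂μ) :
    Prim volume (fun x => W⁻¹ * (ub x * A x + ua x * B x))
      (fun t => k t * (W⁻¹ * (ub1 t * A t + ua1 t * B t))) ∧
    Prim μ (fun x => W⁻¹ * (ub1 x * A x + ua1 x * B x))
      (fun t => w t * (W⁻¹ * (ub t * A t + ua t * B t)) - Φ t) := by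
  have pA : Prim μ A (fun t => Φ t * ua t) := by
    refine ⟨fun c x => hΦa.integrableOn, fun c x hcx => ?_⟩
    have hd : Disjoint (Set.Iic c) (Set.Ioc c x) :=
      Set.disjoint_left.2 fun t h1 h2 => not_lt.2 (Set.mem_Iic.1 h1) h2.1
    rw [hA, hA, ← setIntegral_union hd
      measurableSet_Ioc hΦa.integrableOn hΦa.integrableOn, Set.Iic_union_Ioc_eq_Iic hcx]
  have pB : Prim μ B (fun t => -(Φ t * ub t)) := by
    refine ⟨fun c x => hΦb.neg.integrableOn, fun c x hcx => ?_⟩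
    have hd : Disjoint (Set.Ioc c x) (Set.Ioi x) :=
      Set.disjoint_left.2 fun t h1 h2 => not_lt.2 h1.2 (Set.mem_Ioi.1 h2)
    rw [hB, hB, integral_neg, ← Set.Ioc_union_Ioi_eq_Ioi hcx,
      setIntegral_union hd
      measurableSet_Ioi hΦb.integrableOn hΦb.integrableOn]
    ring
  have iA : ∀ c x, IntegrableOn (fun t => k t * ub1 t * A t) (Set.Ioc c x) volume :=
    fun c x => pA.integrableOn_mul (hb.1 c x)
  have iB : ∀ c x, IntegrableOn (fun t => k t * ua1 t * B t) (Set.Ioc c x) volume :=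
    fun c x => pB.integrableOn_mul (ha.1 c x)
  have jA : ∀ c x, IntegrableOn (fun t => w t * ub t * A t) (Set.Ioc c x) μ :=
    fun c x => pA.integrableOn_mul (hb1.1 c x)
  have jB : ∀ c x, IntegrableOn (fun t => w t * ua t * B t) (Set.Ioc c x) μ :=
    fun c x => pB.integrableOn_mul (ha1.1 c x)
  refine ⟨⟨fun c x => ?_, fun c x hcx => ?_⟩, ⟨fun c x => ?_, fun c x hcx => ?_⟩⟩
  · refine (((iA c x).add (iB c x)).const_mul W⁻¹).congr (Eventually.of_forall fun t => ?_)
    simp only [Pi.add_apply]; ring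
  · have eA := pA.parts_vol hb hcx
    have eB := pB.parts_vol ha hcx
    have e3 : ∫ t in Set.Ioc c x, -(Φ t * ub t) * ua t ∂μ
        = - ∫ t in Set.Ioc c x, Φ t * ua t * ub t ∂μ := by
      rw [← integral_neg]; congr 1; ext t; ring
    have e4 : ∫ t in Set.Ioc c x, k t * (W⁻¹ * (ub1 t * A t + ua1 t * B t))
        = W⁻¹ * ((∫ t in Set.Ioc c x, k t * ub1 t * A t) + ∫ t in Set.Ioc c x, k t * ua1 t * B t) := by
      rw [← integral_add (iA c x) (iB c x), ← integral_const_mul]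
      congr 1; ext t; ring
    rw [e3] at eB
    rw [e4]
    linear_combination W⁻¹ * eA + W⁻¹ * eB
  · refine ((((jA c x).add (jB c x)).const_mul W⁻¹).sub hΦ.integrableOn).congr
      (Eventually.of_forall fun t => ?_)
    simp only [Pi.add_apply, Pi.sub_apply]; ring
  · obtain ⟨lA, eA⟩ := pA.parts hb1 hcx
    obtain ⟨lB, eB⟩ := pB.parts ha1 hcx
    have e4 : ∫ t in Set.Ioc c x, w t * (W⁻¹ * (ub t * A t + ua t * B t)) - Φ t ∂μ
        = W⁻¹ * (((∫ t in Set.Ioc c x, w t * ub t * A t ∂μ)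
          + ∫ t in Set.Ioc c x, w t * ua t * B t ∂μ)
          + ((∫ t in Set.Ioc c x, Φ t * ua t * (ub1 t - w t * ub t * (μ.real {t} : ℂ)) ∂μ)
          + ∫ t in Set.Ioc c x, -(Φ t * ub t) * (ua1 t - w t * ua t * (μ.real {t} : ℂ)) ∂μ)) := by
      have m1 : IntegrableOn (fun t => w t * ub t * A t + w t * ua t * B t) (Set.Ioc c x) μ :=
        (jA c x).add (jB c x)
      have m2 : IntegrableOn (fun t => Φ t * ua t * (ub1 t - w t * ub t * (μ.real {t} : ℂ))
          + -(Φ t * ub t) * (ua1 t - w t * ua t * (μ.real {t} : ℂ))) (Set.Ioc c x) μ :=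
        lA.add lB
      rw [← integral_add (jA c x) (jB c x), ← integral_add lA lB,
        ← integral_add m1 m2, ← integral_const_mul]
      congr 1; ext t
      have hWt : W⁻¹ * (ub t * ua1 t - ub1 t * ua t) = 1 := by
        rw [hW t]; exact inv_mul_cancel₀ hW0
      linear_combination (Φ t) * hWt
    rw [e4]
    linear_combination W⁻¹ * eA + W⁻¹ * eB

lemma wM_ac {T : Set ℝ} {μ : Measure ℝ} {r : ℝ → ℝ} (hK : μ.restrict (tsKappa T) = μ)
    (hr : Integrable r μ) (hrpos : ∀ᵐ t ∂μ, 0 < r t) : μ ≪ wM T μ r := by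
  rw [wM, hK]
  refine withDensity_absolutelyContinuous' hr.aemeasurable.ennreal_ofReal ?_
  filter_upwards [hrpos] with t ht
  simpa using ht

lemma ac_wM {T : Set ℝ} {μ : Measure ℝ} {r : ℝ → ℝ} (hK : μ.restrict (tsKappa T) = μ) :
    wM T μ r ≪ μ := by
  rw [wM, hK]
  exact withDensity_absolutelyContinuous _ _

lemma wM_finite {T : Set ℝ} {μ : Measure ℝ} {r : ℝ → ℝ} (hK : μ.restrict (tsKappa T) = μ)
    (hr : Integrable r μ) : IsFiniteMeasure (wM T μ r) := by
  rw [wM, hK]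
  exact isFiniteMeasure_withDensity_ofReal hr.2

lemma memD2_of {T : Set ℝ} {μ : Measure ℝ} {p r q : ℝ → ℝ} {u u1 h : ℝ → ℂ}
    (hr : Integrable r (μ.restrict (tsKappa T)))
    (hu : Prim volume u (fun t => 1 / extK T (cR p) t * u1 t)) (hu1 : Prim μ u1 h)
    (hi : Integrable h μ) (hu2 : MemLp u 2 (wM T μ r)) (G : Lp ℂ 2 (wM T μ r))
    (hG : ∀ᵐ t ∂(wM T μ r), G t = ellApply r q h u t) : MemD2 T μ p r q u u1 h := by
  refine ⟨hi.locallyIntegrable, fun c x hcx => ⟨?_, hu1.2 c x hcx⟩, memL2T_of_memLp hr hu2,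
    memL2T_of_memLp hr ((Lp.memLp G).ae_eq hG)⟩
  rw [hu.2 c x hcx, intervalIntegral.integral_of_le hcx]
  congr 1
  refine integral_congr_ae (Eventually.of_forall fun t => ?_)
  simp only [div_eq_mul_inv]; ring

lemma sol_prim {T : Set ℝ} {μ : Measure ℝ} {p r q : ℝ → ℝ} {z : ℂ} {u u1 : ℝ → ℂ}
    (hk : ∀ c x, IntegrableOn (fun t => 1 / extK T (cR p) t) (Set.Ioc c x) volume)
    (hw : Integrable (fun t => (q t : ℂ) - z * (r t : ℂ)) μ)
    [IsFiniteMeasure μ]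
    (hu : IsSLSol T μ (cR p) (cR r) (cR q) z 0 u u1) :
    Prim volume u (fun t => 1 / extK T (cR p) t * u1 t) ∧
      Prim μ u1 (fun t => ((q t : ℂ) - z * (r t : ℂ)) * u t) := by
  refine sol_regular hk (fun c x => hw.integrableOn) (fun c x hcx => ?_) (fun c x hcx => ?_)
  · rw [(hu c x hcx).1, intervalIntegral.integral_of_le hcx]
    congr 1
    refine integral_congr_ae (Eventually.of_forall fun t => ?_)
    simp only [div_eq_mul_inv]; ring
  · rw [(hu c x hcx).2]
    congr 1
    refine integral_congr_ae (Eventually.of_forall fun t => ?_)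
    simp [cR]

lemma wr_const {μ : Measure ℝ} [IsFiniteMeasure μ] {k w ua ua1 ub ub1 : ℝ → ℂ}
    (ha : Prim volume ua (fun t => k t * ua1 t)) (ha1 : Prim μ ua1 (fun t => w t * ua t))
    (hb : Prim volume ub (fun t => k t * ub1 t)) (hb1 : Prim μ ub1 (fun t => w t * ub t)) :
    ∀ x, ub x * ua1 x - ub1 x * ua x = ub 0 * ua1 0 - ub1 0 * ua 0 := by
  have key : ∀ c x, c ≤ x → ub x * ua1 x - ub1 x * ua x = ub c * ua1 c - ub1 c * ua c := by
    intro c x hcx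
    have e1 := ha1.parts_vol hb hcx
    have e2 := hb1.parts_vol ha hcx
    have e3 : ∫ t in Set.Ioc c x, k t * ub1 t * ua1 t = ∫ t in Set.Ioc c x, k t * ua1 t * ub1 t := by
      congr 1; ext t; ring
    have e4 : ∫ t in Set.Ioc c x, w t * ua t * ub t ∂μ = ∫ t in Set.Ioc c x, w t * ub t * ua t ∂μ := by
      congr 1; ext t; ring
    rw [e3, e4] at e1
    linear_combination e1 - e2
  intro x
  rcases le_total 0 x with hx | hx
  · exact key 0 x hx
  · exact (key x 0 hx).symm

lemma KFacts.bdd_ae {T : Set ℝ} {α b : ℝ} (h : KFacts T α b) {μ : Measure ℝ}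
    (hμ : ∀ c d : ℝ, c ≤ d →
      μ (Set.Ioc c d) = ENNReal.ofReal (tsSigma (tsKappa T) d - tsSigma (tsKappa T) c))
    {m : Measure ℝ} {u f : ℝ → ℂ} (hu : Prim m u f) : ∃ C, ∀ᵐ t ∂μ, ‖u t‖ ≤ C := by
  obtain ⟨C, hC⟩ := hu.bdd α b
  refine ⟨C, ?_⟩
  have : ∀ᵐ t ∂μ, t ∈ tsKappa T := mem_ae_iff.2 (h.null_compl hμ)
  filter_upwards [this] with t ht
  exact hC t ⟨h.lb t ht, h.ub t ht⟩

lemma Lp_integrable {T : Set ℝ} {μ : Measure ℝ} {r : ℝ → ℝ} (hK : μ.restrict (tsKappa T) = μ)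
    (hr : Integrable r μ) (hrpos : ∀ᵐ t ∂μ, 0 < r t) (F : Lp ℂ 2 (wM T μ r)) :
    Integrable (fun t => F t * (r t : ℂ)) μ := by
  have := wM_finite hK hr
  have h1 : Integrable F (wM T μ r) := (Lp.memLp F).integrable (by norm_num)
  have e : wM T μ r = μ.withDensity fun t => ENNReal.ofReal (r t) := by rw [wM, hK]
  have h2 : Integrable (F : ℝ → ℂ) (μ.withDensity fun t => ENNReal.ofReal (r t)) := by
    rw [← e]; exact h1
  rw [integrable_withDensity_iff_integrable_smul₀' hr.aemeasurable.ennreal_ofReal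
    (Eventually.of_forall fun _ => ENNReal.ofReal_lt_top)] at h2
  refine h2.congr ?_
  filter_upwards [hrpos] with t ht
  rw [ENNReal.toReal_ofReal ht.le, Complex.real_smul, mul_comm]

lemma ae_at_atom {μ : Measure ℝ} {α : ℝ} (hne : μ {α} ≠ 0) {P : ℝ → Prop}
    (h : ∀ᵐ t ∂μ, P t) : P α := by
  by_contra hc
  refine hne (measure_mono_null ?_ (ae_iff.1 h))
  rintro x rfl
  exact hc

lemma atom_null {T : Set ℝ} {α b : ℝ} (h : KFacts T α b) {μ : Measure ℝ}
    (hμ : ∀ c d : ℝ, c ≤ d →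
      μ (Set.Ioc c d) = ENNReal.ofReal (tsSigma (tsKappa T) d - tsSigma (tsKappa T) c))
    {p r q : ℝ → ℝ} (hr : Integrable r (μ.restrict (tsKappa T))) (hrpos : ∀ᵐ t ∂μ, 0 < r t)
    (hk : ∀ c x, IntegrableOn (fun t => 1 / extK T (cR p) t) (Set.Ioc c x) volume)
    {φα φβ : ℝ}
    (S : Lp ℂ 2 (wM T μ r) →ₗ.[ℂ] Lp ℂ 2 (wM T μ r))
    (hSgraph : ∀ F G : Lp ℂ 2 (wM T μ r), (F, G) ∈ S.graph ↔
      ∃ u u1 h : ℝ → ℂ, MemD2 T μ p r q u u1 h ∧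
        (∀ᵐ t ∂(wM T μ r), F t = u t) ∧
        (∀ᵐ t ∂(wM T μ r), G t = ellApply r q h u t) ∧
        u α * (Real.cos φα : ℂ) - u1 α * (Real.sin φα : ℂ) = 0 ∧
        u b * (Real.cos φβ : ℂ) - u1 b * (Real.sin φβ : ℂ) = 0) : μ {α} = 0 := by
  by_contra hne
  have hfin : IsFiniteMeasure μ := h.finite hμ
  have hK := h.restrict_eq hμ
  have hr' : Integrable r μ := by rw [← hK]; exact hr
  have hwf : IsFiniteMeasure (wM T μ r) := wM_finite hK hr'
  have hab : α ≤ b := h.lb b h.right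
  have hm : (μ.real {α} : ℂ) ≠ 0 := by
    rw [Ne, Complex.ofReal_eq_zero, measureReal_eq_zero_iff]; exact hne
  set c0 : ℂ := (μ.real {α} : ℂ)⁻¹ with hc0
  set h0 : ℝ → ℂ := Set.indicator {α} (fun _ => -c0) with hh0
  set u1 : ℝ → ℂ := fun x => if x < α then 1 else 0 with hu1
  set k : ℝ → ℂ := fun t => 1 / extK T (cR p) t with hkdef
  set u : ℝ → ℂ := fun x => ∫ s in α..x, k s * u1 s with hu
  have hu1m : Measurable u1 := Measurable.ite measurableSet_Iio measurable_const measurable_const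
  have hki : ∀ c x, IntegrableOn (fun t => k t * u1 t) (Set.Ioc c x) volume := fun c x =>
    integrableOn_mul_of_bdd measurableSet_Ioc (hk c x) hu1m (C := 1) (fun t _ => by
      simp only [hu1]; split_ifs <;> simp)
  have hint : ∀ c x, IntervalIntegrable (fun t => k t * u1 t) volume c x := fun c x =>
    ⟨hki _ _, hki _ _⟩
  have pu : Prim volume u (fun t => k t * u1 t) := by
    refine ⟨hki, fun c x hcx => ?_⟩
    rw [← intervalIntegral.integral_of_le hcx]
    exact (intervalIntegral.integral_add_adjacent_intervals (hint _ _) (hint _ _)).symm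
  have hi : Integrable h0 μ := (integrable_const _).indicator (measurableSet_singleton α)
  have pu1 : Prim μ u1 h0 := by
    refine ⟨fun c x => hi.integrableOn, fun c x hcx => ?_⟩
    rw [setIntegral_indicator (measurableSet_singleton α)]
    by_cases h1 : c < α
    · by_cases h2 : α ≤ x
      · have : Set.Ioc c x ∩ {α} = {α} := by
          ext t; simp only [Set.mem_inter_iff, Set.mem_singleton_iff, and_iff_right_iff_imp]
          rintro rfl; exact ⟨h1, h2⟩
        rw [this, setIntegral_const, Complex.real_smul]
        simp only [hu1, h1, not_lt.2 h2, if_true, if_false, hc0]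
        field_simp
        ring
      · have : Set.Ioc c x ∩ {α} = ∅ := by
          ext t; simp only [Set.mem_inter_iff, Set.mem_singleton_iff, Set.mem_empty_iff_false,
            iff_false, not_and]
          rintro h3 rfl; exact h2 h3.2
        rw [this]
        simp [hu1, h1, not_le.1 h2]
    · have : Set.Ioc c x ∩ {α} = ∅ := by
          ext t; simp only [Set.mem_inter_iff, Set.mem_singleton_iff, Set.mem_empty_iff_false,
            iff_false, not_and]
          rintro h3 rfl; exact h1 h3.1
      have h2 : ¬ x < α := fun h2 => h1 (hcx.trans_lt h2)
      rw [this]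
      simp only [hu1, h1, h2]
      simp
  have hu0 : ∀ x, α ≤ x → u x = 0 := by
    intro x hx
    simp only [hu]
    rw [intervalIntegral.integral_of_le hx]
    refine setIntegral_eq_zero_of_forall_eq_zero fun t ht => ?_
    simp [hu1, not_lt.2 ht.1.le]
  have hmemK : ∀ᵐ t ∂μ, t ∈ tsKappa T := mem_ae_iff.2 (h.null_compl hμ)
  have hae0 : ∀ᵐ t ∂(wM T μ r), u t = 0 := by
    refine (ac_wM hK).ae_le ?_
    filter_upwards [hmemK] with t ht
    exact hu0 t (h.lb t ht)
  have hu2 : MemLp u 2 (wM T μ r) :=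
    (MemLp.zero (p := 2) (μ := wM T μ r) (ε := ℂ)).ae_eq (by
      filter_upwards [hae0] with t ht
      simp [ht])
  have hGm : MemLp (Set.indicator {α} fun _ => c0 / (r α : ℂ)) 2 (wM T μ r) :=
    memLp_indicator_const 2 (measurableSet_singleton α) _ (Or.inr (measure_ne_top _ _))
  have hG : ∀ᵐ t ∂(wM T μ r), hGm.toLp _ t = ellApply r q h0 u t := by
    filter_upwards [hae0, hGm.coeFn_toLp] with t h1 h2
    rw [h2, ellApply, h1]
    by_cases ht : t = α
    · subst ht; simp [hh0]
    · simp [hh0, ht]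
  have hmem : ((0 : Lp ℂ 2 (wM T μ r)), hGm.toLp _) ∈ S.graph := by
    rw [hSgraph]
    refine ⟨u, u1, h0, memD2_of hr pu pu1 hi hu2 _ hG, ?_, hG, ?_, ?_⟩
    · filter_upwards [hae0, Lp.coeFn_zero ℂ 2 (wM T μ r)] with t h1 h2
      rw [h2, h1]; rfl
    · rw [hu0 α le_rfl]; simp [hu1]
    · rw [hu0 b hab]; simp [hu1, hab]
  have hG0 := LinearPMap.graph_fst_eq_zero_snd S hmem rfl
  have h3 : ∀ᵐ t ∂μ, Set.indicator {α} (fun _ => c0 / (r α : ℂ)) t = 0 := by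
    refine (wM_ac hK hr' hrpos).ae_le ?_
    have h4 := hGm.coeFn_toLp
    rw [hG0] at h4
    filter_upwards [h4, Lp.coeFn_zero ℂ 2 (wM T μ r)] with t h1 h2
    rw [← h1, h2]; rfl
  have h5 := ae_at_atom hne h3
  have h6 := ae_at_atom hne hrpos
  rw [Set.indicator_of_mem (Set.mem_singleton α), div_eq_zero_iff] at h5
  rcases h5 with h5 | h5
  · exact inv_ne_zero hm h5
  · exact h6.ne' (by exact_mod_cast h5)

/-- Resolvent of the self-adjoint operator with separated boundary conditions on a bounded
time scale: for `z ∈ ℂ \ ℝ` and nontrivial solutions `u_a`, `u_b` of `(ℓ - z)u = 0`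
satisfying the boundary condition at `σ(a)` resp. at `b`, the Wronskian `W(u_b, u_a)` is a
nonzero constant, and for every `f ∈ L²(𝕋_κ; r dσ_κ)` the unique `g ∈ dom S` with
`(S - z) g = f` is given by the Green function formula. -/
theorem resolvent_green_function_separated
    (T : Set ℝ) (hne : T.Nonempty) (hcl : IsClosed T)
    (hbb : BddBelow T) (hba : BddAbove T)
    (hfive : ∃ s : Finset ℝ, ↑s ⊆ T ∧ 5 ≤ s.card)
    (μ ν : Measure ℝ)
    (hμ : ∀ c d : ℝ, c ≤ d →
      μ (Set.Ioc c d) = ENNReal.ofReal (tsSigma (tsKappa T) d - tsSigma (tsKappa T) c))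
    (hν : ∀ c d : ℝ, c ≤ d → ν (Set.Ico c d) = ENNReal.ofReal (tsRho T d - tsRho T c))
    (p r q : ℝ → ℝ)
    (hr : Integrable r (μ.restrict (tsKappa T))) (hrpos : ∀ᵐ t ∂μ, 0 < r t)
    (hq : Integrable q (μ.restrict (tsKappa T)))
    (hpne : ∀ᵐ t ∂ν, p t ≠ 0) (hp : Integrable (fun t => 1 / p t) ν)
    (φα φβ : ℝ) (hφα : 0 ≤ φα ∧ φα < Real.pi) (hφβ : 0 ≤ φβ ∧ φβ < Real.pi)
    (hα : tsSigma T (sInf T) < tsSigma T (tsSigma T (sInf T)) → φα ≠ 0)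
    (hβ : tsRho T (sSup T) < tsSigma T (tsRho T (sSup T)) →
      p (sSup T) * Real.sin φβ ≠ (sSup T - tsRho T (sSup T)) * Real.cos φβ)
    (S : Lp ℂ 2 (wM T μ r) →ₗ.[ℂ] Lp ℂ 2 (wM T μ r))
    (hSsa : IsSelfAdjoint S)
    (hSgraph : ∀ F G : Lp ℂ 2 (wM T μ r), (F, G) ∈ S.graph ↔
      ∃ u u1 h : ℝ → ℂ, MemD2 T μ p r q u u1 h ∧
        (∀ᵐ t ∂(wM T μ r), F t = u t) ∧
        (∀ᵐ t ∂(wM T μ r), G t = ellApply r q h u t) ∧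
        u (tsSigma T (sInf T)) * (Real.cos φα : ℂ) -
          u1 (tsSigma T (sInf T)) * (Real.sin φα : ℂ) = 0 ∧
        u (sSup T) * (Real.cos φβ : ℂ) - u1 (sSup T) * (Real.sin φβ : ℂ) = 0)
    (z : ℂ) (hz : z.im ≠ 0) (ua ua1 ub ub1 : ℝ → ℂ)
    (hua : IsSLSol T μ (cR p) (cR r) (cR q) z 0 ua ua1)
    (hub : IsSLSol T μ (cR p) (cR r) (cR q) z 0 ub ub1)
    (hua0 : ¬ ∀ x : ℝ, ua x = 0 ∧ ua1 x = 0) (hub0 : ¬ ∀ x : ℝ, ub x = 0 ∧ ub1 x = 0)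
    (huaBC : ua (tsSigma T (sInf T)) * (Real.cos φα : ℂ) -
      ua1 (tsSigma T (sInf T)) * (Real.sin φα : ℂ) = 0)
    (hubBC : ub (sSup T) * (Real.cos φβ : ℂ) - ub1 (sSup T) * (Real.sin φβ : ℂ) = 0) :
    (∀ x : ℝ, Wr ub ub1 ua ua1 x = Wr ub ub1 ua ua1 0) ∧
    Wr ub ub1 ua ua1 0 ≠ 0 ∧
    ∀ F : Lp ℂ 2 (wM T μ r),
      (∃! G : Lp ℂ 2 (wM T μ r), (G, z • G + F) ∈ S.graph) ∧
      ∀ G : Lp ℂ 2 (wM T μ r), (G, z • G + F) ∈ S.graph →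
        ∀ᵐ x ∂(μ.restrict (tsKappa T)),
          G x = ∫ y in tsKappa T,
            (if x < y then (Wr ub ub1 ua ua1 0)⁻¹ * ua x * ub y
              else (Wr ub ub1 ua ua1 0)⁻¹ * ua y * ub x) * F y * (r y : ℂ) ∂μ := by
  have h := kfacts T hne hcl hbb hba hfive
  obtain ⟨hk, hkne⟩ := h.pbar hν hpne hp
  have hα0 := atom_null h hμ hr hrpos hk S hSgraph
  have hbR := h.null_right hμ
  have hmemK : ∀ᵐ t ∂μ, t ∈ tsKappa T := mem_ae_iff.2 (h.null_compl hμ)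
  have hfin : IsFiniteMeasure μ := h.finite hμ
  have hK := h.restrict_eq hμ
  have hr' : Integrable r μ := by rw [← hK]; exact hr
  have hq' : Integrable q μ := by rw [← hK]; exact hq
  have hwf : IsFiniteMeasure (wM T μ r) := wM_finite hK hr'
  have hac := wM_ac hK hr' hrpos
  have hca := ac_wM (r := r) hK
  set α := tsSigma T (sInf T) with hαdef
  set b := sSup T with hbdef
  have hrC : Integrable (fun t => (r t : ℂ)) μ := hr'.ofReal
  have hqC : Integrable (fun t => (q t : ℂ)) μ := hq'.ofReal
  have hw : Integrable (fun t => (q t : ℂ) - z * (r t : ℂ)) μ := hqC.sub (hrC.const_mul z)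
  obtain ⟨pa, pa1⟩ := sol_prim hk hw hua
  obtain ⟨pb, pb1⟩ := sol_prim hk hw hub
  have hWc := wr_const pa pa1 pb pb1
  have hrne : ∀ᵐ t ∂(wM T μ r), (r t : ℂ) ≠ 0 := by
    refine hca.ae_le ?_
    filter_upwards [hrpos] with t ht
    exact_mod_cast ht.ne'
  have hL2 : ∀ {u f : ℝ → ℂ}, Prim volume u f → MemLp u 2 (wM T μ r) := by
    intro u f hu
    obtain ⟨C, hC⟩ := h.bdd_ae hμ hu
    exact MemLp.of_bound hu.continuous.aestronglyMeasurable C (hca.ae_le hC)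
  have hmulint : ∀ {v u f : ℝ → ℂ}, Integrable v μ → Prim volume u f →
      Integrable (fun t => v t * u t) μ := by
    intro v u f hv hu
    obtain ⟨C, hC⟩ := h.bdd_ae hμ hu
    have : Integrable (fun t => u t * v t) μ :=
      Integrable.bdd_mul (c := C) hv hu.continuous.aestronglyMeasurable hC
    simpa only [mul_comm] using this
  have hW0 : Wr ub ub1 ua ua1 0 ≠ 0 := by
    intro hW
    have hWb : ub b * ua1 b - ub1 b * ua b = 0 := (hWc b).trans hW
    have hbne : ¬ (ub b = 0 ∧ ub1 b = 0) := fun hb0 => hub0 (sol_unique hk hw pb pb1 hb0)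
    have huaB : ua b * (Real.cos φβ : ℂ) - ua1 b * (Real.sin φβ : ℂ) = 0 := by
      by_cases hb0 : ub b = 0
      · have hb1 : ub1 b ≠ 0 := fun hh => hbne ⟨hb0, hh⟩
        apply mul_left_cancel₀ hb1
        linear_combination (-(Real.cos φβ : ℂ)) * hWb + ua1 b * hubBC
      · apply mul_left_cancel₀ hb0
        linear_combination (-(Real.sin φβ : ℂ)) * hWb + ua b * hubBC
    have hG : ∀ᵐ t ∂(wM T μ r), (z • (hL2 pa).toLp ua : Lp ℂ 2 (wM T μ r)) t =
        ellApply r q (fun t => ((q t : ℂ) - z * (r t : ℂ)) * ua t) ua t := by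
      filter_upwards [Lp.coeFn_smul z ((hL2 pa).toLp ua), (hL2 pa).coeFn_toLp, hrne] with t h1 h2 h3
      rw [h1, Pi.smul_apply, h2, ellApply, smul_eq_mul]
      field_simp
      ring
    have hmem : ((hL2 pa).toLp ua, z • (hL2 pa).toLp ua) ∈ S.graph := by
      rw [hSgraph]
      exact ⟨ua, ua1, _, memD2_of hr pa pa1 (hmulint hw pa) (hL2 pa) _ hG,
        (hL2 pa).coeFn_toLp, hG, huaBC, huaB⟩
    have hz0 := sa_zero S hSsa hz hmem
    refine hua0 (trivial_of_ae_zero h hμ hk hkne hw pa pa1 (hac.ae_le ?_))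
    have h4 := (hL2 pa).coeFn_toLp
    rw [hz0] at h4
    filter_upwards [h4, Lp.coeFn_zero ℂ 2 (wM T μ r)] with t h1 h2
    rw [← h1, h2]; rfl
  refine ⟨hWc, hW0, fun F => ?_⟩
  set W := Wr ub ub1 ua ua1 0 with hWdef
  set Φ : ℝ → ℂ := fun t => F t * (r t : ℂ) with hΦdef
  have hΦ : Integrable Φ μ := Lp_integrable hK hr' hrpos F
  have hΦa : Integrable (fun t => Φ t * ua t) μ := hmulint hΦ pa
  have hΦb : Integrable (fun t => Φ t * ub t) μ := hmulint hΦ pb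
  set A : ℝ → ℂ := fun x => ∫ t in Set.Iic x, Φ t * ua t ∂μ with hA
  set B : ℝ → ℂ := fun x => ∫ t in Set.Ioi x, Φ t * ub t ∂μ with hB
  obtain ⟨pg, pg1⟩ := green_prim (W := W) hk hw pa pa1 pb pb1 hΦ hΦa hΦb hWc hW0 A B
    (fun _ => rfl) (fun _ => rfl)
  set g : ℝ → ℂ := fun x => W⁻¹ * (ub x * A x + ua x * B x) with hg
  have hAα : A α = 0 := by
    refine setIntegral_measure_zero _ ?_
    refine measure_mono_null (t := {α} ∪ (tsKappa T)ᶜ) ?_ (measure_union_null hα0 (h.null_compl hμ))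
    intro t ht
    by_cases hh : t = α
    · exact Or.inl hh
    · exact Or.inr fun htK => hh (le_antisymm ht (h.lb t htK))
  have hBb : B b = 0 := by
    refine setIntegral_measure_zero _ (measure_mono_null ?_ (h.null_compl hμ))
    exact fun t ht htK => not_lt.2 (h.ub t htK) ht
  have hgL := hL2 pg
  have hGe : ∀ᵐ t ∂(wM T μ r), (z • hgL.toLp g + F : Lp ℂ 2 (wM T μ r)) t =
      ellApply r q (fun t => ((q t : ℂ) - z * (r t : ℂ)) * g t - Φ t) g t := by
    filter_upwards [Lp.coeFn_add (z • hgL.toLp g) F, Lp.coeFn_smul z (hgL.toLp g),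
      hgL.coeFn_toLp, hrne] with t h0 h1 h2 h3
    rw [h0, Pi.add_apply, h1, Pi.smul_apply, h2, ellApply, smul_eq_mul]
    simp only [hΦdef]
    rw [eq_div_iff h3]
    ring
  have hmem : (hgL.toLp g, z • hgL.toLp g + F) ∈ S.graph := by
    rw [hSgraph]
    refine ⟨g, _, _, memD2_of hr pg pg1 ((hmulint hw pg).sub hΦ) hgL _ hGe,
      hgL.coeFn_toLp, hGe, ?_, ?_⟩
    · simp only [hg, hAα]
      linear_combination (W⁻¹ * B α) * huaBC
    · simp only [hg, hBb]
      linear_combination (W⁻¹ * A b) * hubBC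
  have huniq : ∀ G : Lp ℂ 2 (wM T μ r), (G, z • G + F) ∈ S.graph → G = hgL.toLp g := by
    intro G hG
    have hd := S.graph.sub_mem hG hmem
    have e : (G, z • G + F) - (hgL.toLp g, z • hgL.toLp g + F)
        = (G - hgL.toLp g, z • (G - hgL.toLp g)) := by
      rw [Prod.mk_sub_mk, smul_sub]
      congr 1
      abel
    rw [e] at hd
    exact sub_eq_zero.1 (sa_zero S hSsa hz hd)
  refine ⟨⟨_, hmem, huniq⟩, fun G hG => ?_⟩
  rw [huniq G hG, hK]
  filter_upwards [hac.ae_le hgL.coeFn_toLp] with x hx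
  rw [hx]
  have i1 : Integrable (fun y => (if x < y then W⁻¹ * ua x * ub y
      else W⁻¹ * ua y * ub x) * F y * (r y : ℂ)) μ := by
    have j1 : Integrable (fun y => (Set.Ioi x).indicator (fun y => W⁻¹ * ua x * (Φ y * ub y)) y
        + (Set.Ioi x)ᶜ.indicator (fun y => W⁻¹ * ub x * (Φ y * ua y)) y) μ :=
      ((hΦb.const_mul _).indicator measurableSet_Ioi).add
        ((hΦa.const_mul _).indicator measurableSet_Ioi.compl)
    refine j1.congr (Eventually.of_forall fun y => ?_)
    by_cases hy : x < y
    · simp [hy, hΦdef]; ring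
    · simp [hy, not_lt.1 hy, hΦdef]; ring
  rw [← integral_add_compl measurableSet_Iic i1, Set.compl_Iic]
  have e1 : ∫ y in Set.Iic x, (if x < y then W⁻¹ * ua x * ub y
      else W⁻¹ * ua y * ub x) * F y * (r y : ℂ) ∂μ = W⁻¹ * ub x * A x := by
    simp only [hA]
    rw [← integral_const_mul]
    refine setIntegral_congr_fun measurableSet_Iic fun y hy => ?_
    simp only [if_neg (not_lt.2 (Set.mem_Iic.1 hy)), hΦdef]; ring
  have e2 : ∫ y in Set.Ioi x, (if x < y then W⁻¹ * ua x * ub y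
      else W⁻¹ * ua y * ub x) * F y * (r y : ℂ) ∂μ = W⁻¹ * ua x * B x := by
    simp only [hB]
    rw [← integral_const_mul]
    refine setIntegral_congr_fun measurableSet_Ioi fun y hy => ?_
    simp only [if_pos (Set.mem_Ioi.1 hy), hΦdef]; ring
  rw [e1, e2]
  simp only [hg]; ring
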